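/- arXiv:1802.01793 — 3 statements merged into one kernel-verified Lean document; each statement's English description precedes it below -/
import Mathlib

section
/- For every integer j and all natural numbers i, k, the symmetric identity s_i(j) · s_k(T_{2i+1}(j)) = s_k(j) · s_i(T_{2k+1}(j)) holds. -/
/-!
With `j = 2 cos θ` one has `T_m(j) = 2 cos (m θ)` and
`s_i(j) = sin ((2i + 1) θ/2) / sin (θ/2)`. Hence the product `s_i(j) · s_k(T_{2i+1}(j))` telescopes
to `sin ((2i + 1)(2k + 1) θ/2) / sin (θ/2)`, which is symmetric in `i` and `k`: it is `s_N(j)` with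
`2N + 1 = (2i + 1)(2k + 1)`, i.e. `N = i + k (2i + 1)`.

The algebraic form of this argument extends `s` to integer indices. Sampling a solution of the
Chebyshev recurrence at `x` along an arithmetic progression of difference `m` gives a solution of
the recurrence at `T_m(x)`, so both sides of `s_i(x) · s_k(T_{2i+1}(x)) = s_N(x)` solve the same
recurrence in `k`. They agree at `k = 0` trivially and at `k = -1` by `s_{-i-1} = -s_i`.
-/

/-- The sequence `s_k(n)`: `s_0 = 1`, `s_1 = n + 1`, `s_{k+2} = n·s_{k+1} − s_k`. -/
def s (n : ℤ) : ℕ → ℤ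
  | 0 => 1
  | 1 => n + 1
  | k + 2 => n * s n (k + 1) - s n k

/-- The sequence `r_k(n)`: `r_0 = 1`, `r_1 = n − 1`, `r_{k+2} = n·r_{k+1} − r_k`. -/
def r (n : ℤ) : ℕ → ℤ
  | 0 => 1
  | 1 => n - 1
  | k + 2 => n * r n (k + 1) - r n k

/-- Dilated Chebyshev polynomials of the first kind: `T_0 = 2`, `T_1 = n`. -/
def T (n : ℤ) : ℕ → ℤ
  | 0 => 2
  | 1 => n
  | k + 2 => n * T n (k + 1) - T n k

/-- Dilated Chebyshev polynomials of the second kind: `U_0 = 1`, `U_1 = n`. -/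
def U (n : ℤ) : ℕ → ℤ
  | 0 => 1
  | 1 => n
  | k + 2 => n * U n (k + 1) - U n k

section Recurrence

open Polynomial

variable {R M : Type*} [CommRing R] [AddCommGroup M] [Module R M] {x : R} {f g : ℤ → M}

/-- The two-sided Chebyshev recurrence with parameter `x`, in the form without a distinguished
direction, so that reflections and dilations of the index are treated uniformly. -/
def IsChebyshevRec (x : R) (f : ℤ → M) : Prop :=
  ∀ z, f (z + 1) + f (z - 1) = x • f z

lemma isChebyshevRec_eval_C (x : R) : IsChebyshevRec x fun z ↦ (Chebyshev.C R z).eval x := by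
  intro z
  simp [Chebyshev.C_add_one]

lemma isChebyshevRec_eval_S (x : R) : IsChebyshevRec x fun z ↦ (Chebyshev.S R z).eval x := by
  intro z
  simp [Chebyshev.S_add_one]

namespace IsChebyshevRec

lemma add (hf : IsChebyshevRec x f) (hg : IsChebyshevRec x g) : IsChebyshevRec x (f + g) := by
  intro z
  simp only [Pi.add_apply, smul_add, ← hf z, ← hg z]
  abel

lemma smul_const {c : ℤ → R} (hc : IsChebyshevRec x c) (v : M) :
    IsChebyshevRec x fun z ↦ c z • v := by
  intro z
  simp only [← add_smul, hc z, smul_assoc]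

lemma comp_add_const (hf : IsChebyshevRec x f) (a : ℤ) :
    IsChebyshevRec x fun z ↦ f (z + a) := by
  intro z
  simpa only [add_right_comm, sub_add_eq_add_sub] using hf (z + a)

lemma comp_neg (hf : IsChebyshevRec x f) : IsChebyshevRec x fun z ↦ f (-z) := by
  intro z
  simpa only [neg_add', neg_sub', sub_neg_eq_add, add_comm] using hf (-z)

lemma apply_add_one (hf : IsChebyshevRec x f) (z : ℤ) : f (z + 1) = x • f z - f (z - 1) :=
  eq_sub_of_add_eq (hf z)

lemma apply_add_two (hf : IsChebyshevRec x f) (z : ℤ) : f (z + 2) = x • f (z + 1) - f z := by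
  simpa [add_assoc] using hf.apply_add_one (z + 1)

lemma apply_sub_one (hf : IsChebyshevRec x f) (z : ℤ) : f (z - 1) = x • f z - f (z + 1) :=
  eq_sub_of_add_eq' (hf z)

lemma ext (hf : IsChebyshevRec x f) (hg : IsChebyshevRec x g) (a : ℤ)
    (h_sub_one : f (a - 1) = g (a - 1)) (h : f a = g a) : f = g := by
  suffices H : ∀ z, f (z - 1) = g (z - 1) ∧ f z = g z from funext fun z ↦ (H z).2
  intro z
  induction z using Int.inductionOn' (b := a) with
  | zero => exact ⟨h_sub_one, h⟩
  | succ z _ ih =>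
    rw [add_sub_cancel_right, hf.apply_add_one, hg.apply_add_one, ih.1, ih.2]
    exact ⟨rfl, rfl⟩
  | pred z _ ih =>
    rw [hf.apply_sub_one (z - 1), hg.apply_sub_one (z - 1), sub_add_cancel, ih.1, ih.2]
    exact ⟨rfl, rfl⟩

lemma apply_add_add_apply_sub (hf : IsChebyshevRec x f) (z m : ℤ) :
    f (z + m) + f (z - m) = (Chebyshev.C R m).eval x • f z := by
  have h_left := (hf.comp_add_const z).add (hf.comp_add_const z).comp_neg
  have h_right := (isChebyshevRec_eval_C x).smul_const (f z)
  have h_eq := congrFun (h_left.ext h_right 1 ?_ ?_) m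
  · simpa only [Pi.add_apply, add_comm m z, neg_add_eq_sub] using h_eq
  · simp [two_smul]
  · simpa [add_comm, sub_eq_add_neg] using hf z

lemma comp_add_mul (hf : IsChebyshevRec x f) (a m : ℤ) :
    IsChebyshevRec ((Chebyshev.C R m).eval x) fun k ↦ f (a + k * m) := by
  intro k
  simpa only [add_one_mul, sub_one_mul, add_assoc, add_sub_assoc] using
    hf.apply_add_add_apply_sub (a + k * m) m

end IsChebyshevRec

end Recurrence

section FourthKind

open Polynomial

variable {R : Type*} [CommRing R]

/-- The rescaled Chebyshev polynomials of the fourth kind, indexed by `ℤ`: `chebyshevW R n` at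
`2 cos θ` is `sin ((2n + 1) θ/2) / sin (θ/2)`. They extend the sequence `s` to integer indices. -/
noncomputable def chebyshevW (R : Type*) [CommRing R] (n : ℤ) : R[X] :=
  Chebyshev.S R n + Chebyshev.S R (n - 1)

lemma chebyshevW_zero : chebyshevW R 0 = 1 := by
  simp [chebyshevW]

lemma chebyshevW_one : chebyshevW R 1 = X + 1 := by
  simp [chebyshevW]

lemma chebyshevW_neg_sub_one (n : ℤ) : chebyshevW R (-n - 1) = -chebyshevW R n := by
  rw [chebyshevW, chebyshevW, Chebyshev.S_neg_sub_one, sub_sub, one_add_one_eq_two,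
    Chebyshev.S_neg_sub_two, neg_add_rev, add_comm]

lemma chebyshevW_neg_one : chebyshevW R (-1) = -1 := by
  simpa [chebyshevW_zero] using chebyshevW_neg_sub_one (R := R) 0

lemma isChebyshevRec_eval_chebyshevW (x : R) :
    IsChebyshevRec x fun z ↦ (chebyshevW R z).eval x := by
  have h_add := (isChebyshevRec_eval_S x).add ((isChebyshevRec_eval_S x).comp_add_const (-1))
  simpa only [chebyshevW, eval_add, sub_eq_add_neg, Pi.add_def] using h_add

lemma eval_chebyshevW_mul_eval_eval_C (x : R) (i k : ℤ) :
    (chebyshevW R i).eval x * (chebyshevW R k).eval ((Chebyshev.C R (2 * i + 1)).eval x) =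
      (chebyshevW R (i + k * (2 * i + 1))).eval x := by
  have h_left := (isChebyshevRec_eval_chebyshevW ((Chebyshev.C R (2 * i + 1)).eval x)).smul_const
    ((chebyshevW R i).eval x)
  have h_right := (isChebyshevRec_eval_chebyshevW x).comp_add_mul i (2 * i + 1)
  rw [mul_comm, ← smul_eq_mul]
  refine congrFun (h_left.ext h_right 0 ?neg_one ?zero) k
  case neg_one =>
    have h_index : i + (0 - 1) * (2 * i + 1) = -i - 1 := by ring
    rw [h_index, zero_sub, chebyshevW_neg_one, chebyshevW_neg_sub_one]
    simp
  case zero => simp [chebyshevW_zero]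

lemma s_eq_eval_chebyshevW (n : ℤ) (k : ℕ) : s n k = (chebyshevW ℤ k).eval n := by
  induction k using Nat.twoStepInduction with
  | zero => simp [s, chebyshevW_zero]
  | one => simp [s, chebyshevW_one]
  | more k ih0 ih1 =>
    rw [s, ih0, ih1]
    exact ((isChebyshevRec_eval_chebyshevW n).apply_add_two k).symm

lemma T_eq_eval_C (n : ℤ) (k : ℕ) : T n k = (Chebyshev.C ℤ k).eval n := by
  induction k using Nat.twoStepInduction with
  | zero => simp [T]
  | one => simp [T]
  | more k ih0 ih1 => simp [T, ih0, ih1, Chebyshev.C_add_two]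

theorem s_symmetric_identity_general (x : R) (i k : ℤ) :
    (chebyshevW R i).eval x * (chebyshevW R k).eval ((Chebyshev.C R (2 * i + 1)).eval x) =
      (chebyshevW R k).eval x * (chebyshevW R i).eval ((Chebyshev.C R (2 * k + 1)).eval x) := by
  have h_index : i + k * (2 * i + 1) = k + i * (2 * k + 1) := by ring
  rw [eval_chebyshevW_mul_eval_eval_C, eval_chebyshevW_mul_eval_eval_C, h_index]

end FourthKind

theorem s_symmetric_identity (j : ℤ) (i k : ℕ) :
    s j i * s (T j (2 * i + 1)) k = s j k * s (T j (2 * k + 1)) i := by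
  simpa only [s_eq_eval_chebyshevW, T_eq_eval_C, Nat.cast_add, Nat.cast_mul, Nat.cast_ofNat,
    Nat.cast_one] using s_symmetric_identity_general j i k
end

section
/- Let p be a prime. If p = 2 and n = T_2(j) where j = 2(ℓ² − 1) for some integer ℓ ≥ 2, then r_k(n) is not prime for any k ≥ 1. If p is odd and n = T_p(j) for some integer j ≥ 3, then r_k(n) is not prime for any k ≥ 1 with k ≠ (p − 1)/2. -/
lemma r_add_two (n : ℤ) (k : ℕ) : r n (k + 2) = n * r n (k + 1) - r n k := rfl

lemma T_add_two (n : ℤ) (k : ℕ) : T n (k + 2) = n * T n (k + 1) - T n k := rfl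

lemma T_two (n : ℤ) : T n 2 = n ^ 2 - 2 := by
  simp only [T]
  ring

lemma r_succ_add_r (n : ℤ) (k : ℕ) : r n (k + 1) + r n k = T n (k + 1) := by
  induction k using Nat.twoStepInduction with
  | zero => simp [r, T]
  | one => simp only [r, T]; ring
  | more k ih₀ ih₁ =>
    linear_combination r_add_two n (k + 1) + r_add_two n k - T_add_two n (k + 1) + n * ih₁ - ih₀

lemma add_two_mul_r (n : ℤ) (k : ℕ) : (n + 2) * r n k = T n (k + 1) + T n k := by
  induction k using Nat.twoStepInduction with
  | zero => simp [r, T]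
  | one => simp only [r, T]; ring
  | more k ih₀ ih₁ =>
    linear_combination (n + 2) * r_add_two n k - T_add_two n (k + 1) - T_add_two n k + n * ih₁ - ih₀

lemma r_add_two_mul_add_r (n : ℤ) (i d : ℕ) :
    r n (i + 2 * d) + r n i = r n (i + d) * T n d := by
  induction d using Nat.twoStepInduction generalizing i with
  | zero => simp only [mul_zero, add_zero, T]; ring
  | one => simp only [mul_one, r_add_two, T]; ring
  | more d ih₀ ih₁ =>
    have h₀ := ih₀ (i + 2)
    have h₁ := ih₁ (i + 1)
    rw [show i + 2 + 2 * d = i + 2 * d + 2 by ring, show i + 2 + d = i + (d + 2) by ring] at h₀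
    rw [show i + 1 + 2 * (d + 1) = i + 2 * d + 2 + 1 by ring,
      show i + 1 + (d + 1) = i + (d + 2) by ring] at h₁
    rw [show i + 2 * (d + 2) = i + 2 * d + 2 + 2 by ring]
    linear_combination r_add_two n (i + 2 * d + 2) + r_add_two n i
      - r n (i + (d + 2)) * T_add_two n d + n * h₁ - h₀

/-- The analogue of `r_add_two_mul_add_r` for a reflection of `i` past the symmetry
`r_{-1-i} = r_i`. -/
lemma r_two_mul_add_one_add_add_r (n : ℤ) (k i : ℕ) :
    r n (2 * k + 1 + i) + r n i = r n k * T n (k + 1 + i) := by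
  induction k using Nat.twoStepInduction generalizing i with
  | zero => simpa [r, add_comm] using r_succ_add_r n i
  | one =>
    rw [show 2 * 1 + 1 + i = i + 1 + 2 by ring, show 1 + 1 + i = i + 1 + 1 by ring,
      ← r_succ_add_r]
    simp only [r]
    ring
  | more k ih₀ ih₁ =>
    have h₀ := ih₀ (i + 2)
    have h₁ := ih₁ (i + 1)
    rw [show 2 * k + 1 + (i + 2) = 2 * k + i + 3 by ring,
      show k + 1 + (i + 2) = k + 2 + 1 + i by ring] at h₀
    rw [show 2 * (k + 1) + 1 + (i + 1) = 2 * k + i + 3 + 1 by ring,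
      show k + 1 + 1 + (i + 1) = k + 2 + 1 + i by ring] at h₁
    rw [show 2 * (k + 2) + 1 + i = 2 * k + i + 3 + 2 by ring]
    linear_combination r_add_two n (2 * k + i + 3) + r_add_two n i
      - T n (k + 2 + 1 + i) * r_add_two n k + n * h₁ - h₀

lemma r_T_two_mul_self (n : ℤ) (k : ℕ) : r (T n 2) k * n = T n (2 * k + 1) := by
  induction k using Nat.twoStepInduction with
  | zero => simp [r, T]
  | one => simp only [r, T]; ring
  | more k ih₀ ih₁ =>
    have hT : T n (2 * (k + 2) + 1) + T n (2 * k + 1) = T n (2 * (k + 1) + 1) * T n 2 := by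
      simp only [mul_add, mul_one, Nat.reduceMul, T_add_two, T]
      ring
    linear_combination n * r_add_two (T n 2) k - hT + T n 2 * ih₁ - ih₀

lemma add_two_mul_r_sq (n : ℤ) (k : ℕ) : (n + 2) * r n k ^ 2 = T n (2 * k + 1) + 2 := by
  have h₀ := r_add_two_mul_add_r n 0 k
  have h₁ := r_two_mul_add_one_add_add_r n k 0
  simp only [zero_add, add_zero, r] at h₀ h₁
  linear_combination r n k * add_two_mul_r n k - h₀ - h₁ + r_succ_add_r n (2 * k)

lemma r_T_two_mul_sq_sub_one (ℓ : ℤ) (k : ℕ) :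
    r (T (2 * (ℓ ^ 2 - 1)) 2) k * (ℓ ^ 2 - 1) =
      (ℓ * r (2 * (ℓ ^ 2 - 1)) k - 1) * (ℓ * r (2 * (ℓ ^ 2 - 1)) k + 1) := by
  refine mul_left_cancel₀ (two_ne_zero (α := ℤ)) ?_
  linear_combination r_T_two_mul_self (2 * (ℓ ^ 2 - 1)) k - add_two_mul_r_sq (2 * (ℓ ^ 2 - 1)) k

lemma r_T_odd_mul_r (n : ℤ) (q k : ℕ) :
    r (T n (2 * q + 1)) k * r n q = r n (q + (2 * q + 1) * k) := by
  induction k using Nat.twoStepInduction with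
  | zero => simp [r]
  | one =>
    have h := r_two_mul_add_one_add_add_r n q q
    rw [show q + 1 + q = 2 * q + 1 by ring] at h
    rw [mul_one, add_comm q]
    simp only [r]
    linear_combination -h
  | more k ih₀ ih₁ =>
    have h := r_add_two_mul_add_r n (q + (2 * q + 1) * k) (2 * q + 1)
    rw [show q + (2 * q + 1) * k + 2 * (2 * q + 1) = q + (2 * q + 1) * (k + 2) by ring,
      show q + (2 * q + 1) * k + (2 * q + 1) = q + (2 * q + 1) * (k + 1) by ring] at h
    linear_combination r n q * r_add_two (T n (2 * q + 1)) k - h + T n (2 * q + 1) * ih₁ - ih₀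

lemma r_T_odd_mul_r_comm (n : ℤ) (q k : ℕ) :
    r (T n (2 * q + 1)) k * r n q = r (T n (2 * k + 1)) q * r n k := by
  rw [r_T_odd_mul_r, r_T_odd_mul_r]
  congr 1
  ring

lemma monotone_abs_of_recurrence {n : ℤ} {u : ℕ → ℤ} (hn : 2 ≤ |n|)
    (hu : ∀ k, u (k + 2) = n * u (k + 1) - u k) (h₀ : |u 0| ≤ |u 1|) :
    Monotone fun k => |u k| := by
  refine monotone_nat_of_le_succ fun k => ?_
  induction k with
  | zero => exact h₀
  | succ k ih =>
    have h := abs_sub_abs_le_abs_sub (n * u (k + 1)) (u k)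
    rw [← hu, abs_mul] at h
    nlinarith [abs_nonneg (u (k + 1))]

lemma monotone_abs_r {n : ℤ} (hn : 2 ≤ |n|) : Monotone fun k => |r n k| := by
  refine monotone_abs_of_recurrence hn (r_add_two n) ?_
  have h := abs_sub_abs_le_abs_sub n 1
  simp only [r, abs_one] at h ⊢
  linarith

lemma monotone_abs_T {n : ℤ} (hn : 2 ≤ |n|) : Monotone fun k => |T n k| :=
  monotone_abs_of_recurrence hn (T_add_two n) (by simpa [T] using hn)

lemma sub_one_mul_abs_r_le {n : ℤ} (hn : 2 ≤ |n|) (k : ℕ) :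
    (|n| - 1) * |r n k| ≤ |r n (k + 1)| := by
  cases k with
  | zero => simpa [r] using abs_sub_abs_le_abs_sub n 1
  | succ k =>
    have h := abs_sub_abs_le_abs_sub (n * r n (k + 1)) (r n k)
    rw [← r_add_two, abs_mul] at h
    linarith [monotone_abs_r hn k.le_succ]

lemma abs_r_succ_le {n : ℤ} (hn : 2 ≤ |n|) (k : ℕ) : |r n (k + 1)| ≤ (|n| + 1) * |r n k| := by
  cases k with
  | zero => simpa [r] using abs_sub n 1
  | succ k =>
    have h := abs_sub (n * r n (k + 1)) (r n k)
    rw [← r_add_two, abs_mul] at h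
    linarith [monotone_abs_r hn k.le_succ]

lemma r_ne_zero {n : ℤ} (hn : 2 ≤ |n|) (k : ℕ) : r n k ≠ 0 := by
  have h : |r n 0| ≤ |r n k| := monotone_abs_r hn k.zero_le
  rw [← abs_pos]
  exact lt_of_lt_of_le (by simp [r]) h

lemma strictMono_abs_r {n : ℤ} (hn : 3 ≤ |n|) : StrictMono fun k => |r n k| := by
  refine strictMono_nat_of_lt_succ fun k => ?_
  have hpos := abs_pos.2 (r_ne_zero (by omega : 2 ≤ |n|) k)
  nlinarith [sub_one_mul_abs_r_le (by omega : 2 ≤ |n|) k]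

lemma abs_r_lt_abs_r {m n : ℤ} (hm : 2 ≤ |m|) (hmn : |m| + 2 < |n|) {k : ℕ} (hk : k ≠ 0) :
    |r m k| < |r n k| := by
  have hn : 2 ≤ |n| := by omega
  have step {i : ℕ} (hi : |r m i| ≤ |r n i|) : |r m (i + 1)| < |r n (i + 1)| :=
    calc |r m (i + 1)| ≤ (|m| + 1) * |r m i| := abs_r_succ_le hm i
      _ ≤ (|m| + 1) * |r n i| := by gcongr
      _ < (|n| - 1) * |r n i| :=
        mul_lt_mul_of_pos_right (by omega) (abs_pos.2 (r_ne_zero hn i))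
      _ ≤ |r n (i + 1)| := sub_one_mul_abs_r_le hn i
  induction k, Nat.one_le_iff_ne_zero.2 hk using Nat.le_induction with
  | base => exact step (by simp [r])
  | succ i hi ih => exact step (ih (by omega)).le

lemma abs_add_two_lt_abs_T {n : ℤ} (hn : 3 ≤ |n|) {m : ℕ} (hm : 2 ≤ m) : |n| + 2 < |T n m| :=
  calc |n| + 2 < |n| ^ 2 - 2 := by nlinarith
    _ ≤ |T n 2| := by rw [T_two, sq_abs]; exact le_abs_self _
    _ ≤ |T n m| := monotone_abs_T (by omega) hm

lemma not_dvd_of_abs_lt_abs {a b : ℤ} (hb : b ≠ 0) (h : |b| < |a|) : ¬ a ∣ b := fun hab =>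
  hb (Int.eq_zero_of_abs_lt_dvd ((abs_dvd a b).2 hab) h)

lemma periodic_r_dvd_r (n : ℤ) (k : ℕ) :
    Function.Periodic (fun q => r n k ∣ r n q) (2 * k + 1) := fun q => by
  have h : r n k ∣ r n (q + (2 * k + 1)) + r n q :=
    ⟨_, add_comm q _ ▸ r_two_mul_add_one_add_add_r n k q⟩
  exact propext ⟨fun hq => (dvd_add_right hq).1 h, fun hq => (dvd_add_left hq).1 h⟩

lemma r_dvd_r_add_r {n : ℤ} {a b k : ℕ} (h : a + b = 2 * k) : r n k ∣ r n a + r n b := by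
  wlog hab : b ≤ a generalizing a b
  · rw [add_comm]
    exact this (by omega) (by omega)
  obtain ⟨d, rfl⟩ : ∃ d, a = b + 2 * d := ⟨k - b, by omega⟩
  obtain rfl : k = b + d := by omega
  exact ⟨_, r_add_two_mul_add_r n b d⟩

lemma r_dvd_r_iff_of_le {n : ℤ} (hn : 3 ≤ |n|) {k i : ℕ} (hi : i ≤ 2 * k) :
    r n k ∣ r n i ↔ i = k := by
  have not_dvd_of_lt {i : ℕ} (hik : i < k) : ¬ r n k ∣ r n i :=
    not_dvd_of_abs_lt_abs (r_ne_zero (by omega) i) (strictMono_abs_r hn hik)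
  refine ⟨fun h => ?_, fun h => h ▸ dvd_rfl⟩
  rcases lt_trichotomy i k with hik | hik | hik
  · exact absurd h (not_dvd_of_lt hik)
  · exact hik
  · exact absurd ((dvd_add_right h).1 (r_dvd_r_add_r (by omega : i + (2 * k - i) = 2 * k)))
      (not_dvd_of_lt (by omega))

lemma mod_two_mul_add_one_eq_iff (k q : ℕ) : q % (2 * k + 1) = k ↔ 2 * k + 1 ∣ 2 * q + 1 := by
  have hlt := Nat.mod_lt q (Nat.succ_pos (2 * k))
  have hsplit : 2 * q + 1 =
      (2 * k + 1) * (2 * (q / (2 * k + 1))) + (2 * (q % (2 * k + 1)) + 1) := by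
    linarith [Nat.div_add_mod q (2 * k + 1)]
  rw [hsplit, Nat.dvd_add_right (Dvd.intro _ rfl)]
  generalize q % (2 * k + 1) = i at hlt ⊢
  refine ⟨fun h => by rw [h], fun h => ?_⟩
  have := Nat.eq_of_dvd_of_lt_two_mul (by omega) h (by omega)
  omega

lemma r_dvd_r_iff {n : ℤ} (hn : 3 ≤ |n|) (k q : ℕ) : r n k ∣ r n q ↔ 2 * k + 1 ∣ 2 * q + 1 := by
  have hmod : q % (2 * k + 1) ≤ 2 * k := Nat.lt_succ_iff.1 (Nat.mod_lt _ (by omega))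
  rw [← mod_two_mul_add_one_eq_iff, ← r_dvd_r_iff_of_le hn hmod]
  exact ((periodic_r_dvd_r n k).map_mod_nat q).symm.to_iff

lemma dvd_or_dvd_of_prime_mul_eq_mul {M : Type*} [CommMonoidWithZero M] [IsCancelMulZero M]
    {p c x y : M} (hp : Prime p) (h : p * c = x * y) : x ∣ c ∨ y ∣ c := by
  rcases hp.dvd_or_dvd (Dvd.intro _ h) with ⟨t, rfl⟩ | ⟨t, rfl⟩
  · exact .inr (Dvd.intro_left t (mul_left_cancel₀ hp.ne_zero (by rw [h, mul_assoc])).symm)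
  · exact .inl (Dvd.intro t (mul_left_cancel₀ hp.ne_zero (by rw [h, mul_left_comm])).symm)

lemma not_prime_r_T_two {ℓ : ℤ} (hℓ : 2 ≤ |ℓ|) {k : ℕ} (hk : k ≠ 0) :
    ¬ Prime (r (T (2 * (ℓ ^ 2 - 1)) 2) k) := by
  have hj : 6 ≤ 2 * (ℓ ^ 2 - 1) := by nlinarith [sq_abs ℓ]
  have hr : |ℓ| < |r (2 * (ℓ ^ 2 - 1)) k| :=
    calc |ℓ| < 2 * (ℓ ^ 2 - 1) - 1 := by nlinarith [sq_abs ℓ]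
      _ ≤ |r (2 * (ℓ ^ 2 - 1)) 1| := le_abs_self _
      _ ≤ |r (2 * (ℓ ^ 2 - 1)) k| :=
        monotone_abs_r (le_abs.2 (.inl (by omega))) (Nat.one_le_iff_ne_zero.2 hk)
  have hlt : |ℓ ^ 2 - 1| < |ℓ * r (2 * (ℓ ^ 2 - 1)) k| - 1 := by
    rw [abs_mul, abs_of_pos (by omega)]
    nlinarith [sq_abs ℓ]
  have hne : ℓ ^ 2 - 1 ≠ 0 := by omega
  intro hP
  rcases dvd_or_dvd_of_prime_mul_eq_mul hP (r_T_two_mul_sq_sub_one ℓ k) with hdvd | hdvd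
  · refine not_dvd_of_abs_lt_abs hne (hlt.trans_le ?_) hdvd
    simpa only [abs_one] using abs_sub_abs_le_abs_sub (ℓ * r (2 * (ℓ ^ 2 - 1)) k) 1
  · refine not_dvd_of_abs_lt_abs hne (hlt.trans_le ?_) hdvd
    simpa only [abs_one] using abs_sub_abs_le_abs_add (ℓ * r (2 * (ℓ ^ 2 - 1)) k) 1

lemma not_prime_r_T_odd {n : ℤ} (hn : 3 ≤ |n|) {k q : ℕ} (hq : q ≠ 0)
    (hkq : ¬ 2 * k + 1 ∣ 2 * q + 1) : ¬ Prime (r (T n (2 * q + 1)) k) := fun hP => by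
  have hk : k ≠ 0 := by rintro rfl; simp at hkq
  rcases dvd_or_dvd_of_prime_mul_eq_mul hP (r_T_odd_mul_r_comm n q k) with hdvd | hdvd
  · have hlt : |r n q| < |r (T n (2 * k + 1)) q| :=
      abs_r_lt_abs_r (by omega) (abs_add_two_lt_abs_T hn (by omega)) hq
    exact not_dvd_of_abs_lt_abs (r_ne_zero (by omega) q) hlt hdvd
  · exact hkq ((r_dvd_r_iff hn k q).1 hdvd)

theorem r_composite_for_chebyshev_values_general :
    (∀ ℓ : ℤ, 2 ≤ |ℓ| → ∀ k : ℕ, k ≠ 0 → ¬ Prime (r (T (2 * (ℓ ^ 2 - 1)) 2) k)) ∧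
    (∀ m : ℕ, Odd m → m ≠ 1 → ∀ j : ℤ, 3 ≤ |j| → ∀ k : ℕ, ¬ 2 * k + 1 ∣ m →
      ¬ Prime (r (T j m) k)) := by
  refine ⟨fun ℓ hℓ k hk => not_prime_r_T_two hℓ hk, ?_⟩
  rintro _ ⟨q, rfl⟩ hq j hj k hk
  exact not_prime_r_T_odd hj (by omega) hk

theorem r_composite_for_chebyshev_values (p : ℕ) (hp : p.Prime) :
    (p = 2 → ∀ ℓ : ℤ, 2 ≤ ℓ → ∀ k : ℕ, 1 ≤ k →
      ¬ Prime (r (T (2 * (ℓ ^ 2 - 1)) 2) k)) ∧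
    (Odd p → ∀ j : ℤ, 3 ≤ j → ∀ k : ℕ, 1 ≤ k → k ≠ (p - 1) / 2 →
      ¬ Prime (r (T j p) k)) := by
  obtain ⟨htwo, hodd⟩ := r_composite_for_chebyshev_values_general
  refine ⟨fun _ ℓ hℓ k hk => htwo ℓ (le_abs.2 (.inl hℓ)) k (by omega), fun hp_odd j hj k hk hkp =>
    hodd p hp_odd hp.ne_one j (le_abs.2 (.inl hj)) k fun hdvd => ?_⟩
  rcases (Nat.dvd_prime hp).1 hdvd with h | h <;> omega
end

section
/- For every integer n, one has s_{2j}(n) − 1 = (n + 2) · r_j(n) · U_{j−1}(n) for every j ≥ 1, and s_{2j+1}(n) + 1 = (n + 2) · r_j(n) · U_j(n) for every j ≥ 0. -/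
open Polynomial

section Polynomials

variable (R : Type*) [CommRing R]

theorem chebyshevS_add (m k : ℤ) :
    Chebyshev.S R (m + k) =
      Chebyshev.S R m * Chebyshev.S R k - Chebyshev.S R (m - 1) * Chebyshev.S R (k - 1) := by
  induction k using Chebyshev.induct with
  | zero => simp
  | one => simpa [mul_comm] using Chebyshev.S_add_one R m
  | add_two k ih₁ ih₀ =>
    have h₁ := Chebyshev.S_add_two R (m + k)
    have h₂ := Chebyshev.S_add_two R k
    have h₃ := Chebyshev.S_add_one R k
    linear_combination (norm := ring_nf) h₁ + X * ih₁ - ih₀ - Chebyshev.S R m * h₂ +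
      Chebyshev.S R (m - 1) * h₃
  | neg_add_one k ih₀ ih₁ =>
    have h₁ := Chebyshev.S_sub_one R (m - k)
    have h₂ := Chebyshev.S_sub_one R (-k)
    have h₃ := Chebyshev.S_sub_two R (-k)
    linear_combination (norm := ring_nf) h₁ + X * ih₀ - ih₁ - Chebyshev.S R m * h₂ +
      Chebyshev.S R (m - 1) * h₃

theorem chebyshevS_two_mul (j : ℤ) :
    Chebyshev.S R (2 * j) = Chebyshev.S R j ^ 2 - Chebyshev.S R (j - 1) ^ 2 := by
  rw [two_mul, chebyshevS_add, sq, sq]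

theorem chebyshevS_two_mul_add_one (j : ℤ) :
    Chebyshev.S R (2 * j + 1) =
      Chebyshev.S R j * (Chebyshev.S R (j + 1) - Chebyshev.S R (j - 1)) := by
  rw [show 2 * j + 1 = (j + 1) + j by ring, chebyshevS_add, add_sub_cancel_right]
  ring

/-- The Chebyshev polynomial of the third kind in the variable `X / 2`, in terms of the rescaled
polynomials `Chebyshev.S` of the second kind; its value at `n : ℤ` is `r n k` for `k ≥ 0`. -/
noncomputable def dilatedChebyshevV (k : ℤ) : R[X] :=
  Chebyshev.S R k - Chebyshev.S R (k - 1)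

/-- The Chebyshev polynomial of the fourth kind in the variable `X / 2`, in terms of the rescaled
polynomials `Chebyshev.S` of the second kind; its value at `n : ℤ` is `s n k` for `k ≥ 0`. -/
noncomputable def dilatedChebyshevW (k : ℤ) : R[X] :=
  Chebyshev.S R k + Chebyshev.S R (k - 1)

theorem dilatedChebyshevV_add_two (k : ℤ) :
    dilatedChebyshevV R (k + 2) = X * dilatedChebyshevV R (k + 1) - dilatedChebyshevV R k := by
  simp only [dilatedChebyshevV]
  have h₁ := Chebyshev.S_add_two R k
  have h₂ := Chebyshev.S_add_one R k
  linear_combination (norm := ring_nf) h₁ - h₂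

theorem dilatedChebyshevW_add_two (k : ℤ) :
    dilatedChebyshevW R (k + 2) = X * dilatedChebyshevW R (k + 1) - dilatedChebyshevW R k := by
  simp only [dilatedChebyshevW]
  have h₁ := Chebyshev.S_add_two R k
  have h₂ := Chebyshev.S_add_one R k
  linear_combination (norm := ring_nf) h₁ + h₂

theorem s_minus_plus_one_factorizations_general (j : ℤ) :
    dilatedChebyshevW R (2 * j) - 1 =
        (X + 2) * dilatedChebyshevV R j * Chebyshev.S R (j - 1) ∧
      dilatedChebyshevW R (2 * j + 1) + 1 =
        (X + 2) * dilatedChebyshevV R j * Chebyshev.S R j := by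
  have cassini : Chebyshev.S R (j - 1) ^ 2 + Chebyshev.S R j ^ 2 -
      X * Chebyshev.S R (j - 1) * Chebyshev.S R j = 1 := by
    simpa using Chebyshev.S_sq_add_S_sq R (j - 1)
  have even := chebyshevS_two_mul R j
  have odd := chebyshevS_two_mul_add_one R j
  have odd_pred : Chebyshev.S R (2 * j - 1) =
      Chebyshev.S R (j - 1) * (Chebyshev.S R j - Chebyshev.S R (j - 2)) := by
    convert chebyshevS_two_mul_add_one R (j - 1) using 3 <;> ring_nf
  simp only [dilatedChebyshevV, dilatedChebyshevW, add_sub_cancel_right]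
  constructor
  · linear_combination even + odd_pred + cassini -
      Chebyshev.S R (j - 1) * Chebyshev.S_sub_two R j
  · linear_combination odd + even - cassini + Chebyshev.S R j * Chebyshev.S_add_one R j

end Polynomials

section Evaluation

variable (n : ℤ)

theorem U_eq_eval : ∀ k : ℕ, U n k = (Chebyshev.S ℤ k).eval n
  | 0 => by simp [U]
  | 1 => by simp [U]
  | k + 2 => by simp [U, U_eq_eval k, U_eq_eval (k + 1), Chebyshev.S_add_two]

theorem r_eq_eval : ∀ k : ℕ, r n k = (dilatedChebyshevV ℤ k).eval n
  | 0 => by simp [r, dilatedChebyshevV]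
  | 1 => by simp [r, dilatedChebyshevV]
  | k + 2 => by simp [r, r_eq_eval k, r_eq_eval (k + 1), dilatedChebyshevV_add_two]

theorem s_eq_eval : ∀ k : ℕ, s n k = (dilatedChebyshevW ℤ k).eval n
  | 0 => by simp [s, dilatedChebyshevW]
  | 1 => by simp [s, dilatedChebyshevW]
  | k + 2 => by simp [s, s_eq_eval k, s_eq_eval (k + 1), dilatedChebyshevW_add_two]

end Evaluation

theorem s_minus_plus_one_factorizations (n : ℤ) :
    (∀ j : ℕ, 1 ≤ j → s n (2 * j) - 1 = (n + 2) * r n j * U n (j - 1)) ∧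
    (∀ j : ℕ, s n (2 * j + 1) + 1 = (n + 2) * r n j * U n j) := by
  simp only [s_eq_eval, r_eq_eval, U_eq_eval]
  refine ⟨fun j hj => ?_, fun j => ?_⟩
  · simpa [hj] using congrArg (eval n) (s_minus_plus_one_factorizations_general ℤ j).1
  · simpa using congrArg (eval n) (s_minus_plus_one_factorizations_general ℤ j).2
end
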